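/- Among all trees on n vertices, the path P_n has the strictly minimal Laplacian Estrada index: LEE(P_n) < LEE(T) for every n-vertex tree T not isomorphic to P_n. -/

import Mathlib

/-- Laplacian Estrada index: the sum of `exp` over the Laplacian eigenvalues. -/
noncomputable def LEE {V : Type*} [Fintype V] [DecidableEq V] (G : SimpleGraph V) : ℝ :=
  letI := Classical.decRel G.Adj
  ∑ i : V, Real.exp ((SimpleGraph.posSemidef_lapMatrix ℝ G).1.eigenvalues i)

namespace PathLEE

open Finset Matrix

/-- First-return recursion for attaching a pendant vertex. -/
noncomputable def step (b : ℕ → ℝ) : ℕ → ℝ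
  | 0 => 1
  | 1 => 0
  | (k+2) => ∑ j : Fin (k+1), b j * step b (k - j)
termination_by k => k
decreasing_by omega

lemma step_add_two (b : ℕ → ℝ) (k : ℕ) :
    step b (k+2) = ∑ j ∈ range (k+1), b j * step b (k - j) := by
  rw [step, Finset.sum_range]

lemma step_nonneg {b : ℕ → ℝ} (hb : ∀ k, 0 ≤ b k) (k : ℕ) : 0 ≤ step b k := by
  induction k using Nat.strong_induction_on with
  | _ k ih =>
    match k with
    | 0 => simp [step]
    | 1 => simp [step]
    | (k+2) =>
      rw [step_add_two]
      exact sum_nonneg fun j _ => mul_nonneg (hb _) (ih _ (by omega))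

lemma step_mono {b c : ℕ → ℝ} (hb : ∀ k, 0 ≤ b k) (hbc : ∀ k, b k ≤ c k) (k : ℕ) :
    step b k ≤ step c k := by
  induction k using Nat.strong_induction_on with
  | _ k ih =>
    match k with
    | 0 => simp [step]
    | 1 => simp [step]
    | (k+2) =>
      rw [step_add_two, step_add_two]
      exact sum_le_sum fun j _ => mul_le_mul (hbc _) (ih _ (by omega)) (step_nonneg hb _)
        ((hb _).trans (hbc _))

/-- Closed-walk numbers of the path on `m` vertices at an end vertex. -/
noncomputable def pw : ℕ → ℕ → ℝ
  | 0 => fun _ => 0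
  | (m+1) => step (pw m)

lemma pw_nonneg (m k : ℕ) : 0 ≤ pw m k := by
  induction m generalizing k with
  | zero => simp [pw]
  | succ m ih => exact step_nonneg ih k

/-- Closed-walk increments. -/
noncomputable def incr (a b : ℕ → ℝ) (k : ℕ) : ℝ :=
  a (k+1) + ∑ j ∈ range (k+1), ∑ l ∈ range (k - j), a l * b (k - 1 - l)

lemma incr_mono {a b a' b' : ℕ → ℝ} (ha : ∀ k, 0 ≤ a k) (hb : ∀ k, 0 ≤ b k)
    (haa : ∀ k, a k ≤ a' k) (hbb : ∀ k, b k ≤ b' k) (k : ℕ) : incr a b k ≤ incr a' b' k := by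
  unfold incr
  refine add_le_add (haa _) (sum_le_sum fun j _ => sum_le_sum fun l _ => ?_)
  exact mul_le_mul (haa _) (hbb _) (hb _) ((ha _).trans (haa _))

/-- traces of the `(k+1)`-st power for the path on `m` vertices -/
noncomputable def pt : ℕ → ℕ → ℝ
  | 0 => fun _ => 0
  | (m+1) => fun k => pt m k + incr (pw (m+1)) (pw m) k

lemma pw_one_succ (k : ℕ) : pw 1 (k+1) = 0 := by
  cases k with
  | zero => simp [pw, step]
  | succ k => simp [pw, step_add_two]

lemma pw_zero (m : ℕ) : pw (m+1) 0 = 1 := by simp [pw, step]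

lemma pt_one (k : ℕ) : pt 1 k = 0 := by
  simp [pt, incr, pw_one_succ]
  simp [pw]

/-- Coalescence recursion. -/
noncomputable def beta (x y : ℕ → ℝ) (i : ℕ) : ℝ :=
  x (i+1) + ∑ j : Fin i, x (j+1) * beta y x (i - 1 - j)
termination_by i
decreasing_by omega

lemma beta_eq (x y : ℕ → ℝ) (i : ℕ) :
    beta x y i = x (i+1) + ∑ j ∈ range i, x (j+1) * beta y x (i - 1 - j) := by
  rw [beta, Finset.sum_range]

lemma beta_nonneg (i : ℕ) {x y : ℕ → ℝ} (hx : ∀ k, 0 ≤ x k) (hy : ∀ k, 0 ≤ y k) :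
    0 ≤ beta x y i := by
  induction i using Nat.strong_induction_on generalizing x y with
  | _ i ih =>
    rw [beta_eq]
    refine add_nonneg (hx _) (sum_nonneg fun j hj => mul_nonneg (hx _) (ih _ ?_ hy hx))
    have := mem_range.1 hj
    omega

lemma beta_mono (i : ℕ) {x y x' y' : ℕ → ℝ} (hx : ∀ k, 0 ≤ x k) (hy : ∀ k, 0 ≤ y k)
    (hxx : ∀ k, x k ≤ x' k) (hyy : ∀ k, y k ≤ y' k) :
    beta x y i ≤ beta x' y' i := by
  induction i using Nat.strong_induction_on generalizing x y x' y' with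
  | _ i ih =>
    rw [beta_eq, beta_eq]
    refine add_le_add (hxx _) (sum_le_sum fun j hj => ?_)
    have := mem_range.1 hj
    exact mul_le_mul (hxx _) (ih _ (by omega) hy hx hyy hxx) (beta_nonneg _ hy hx)
      ((hx _).trans (hxx _))

variable {W : Type*} [Fintype W] [DecidableEq W]

lemma tele_left (B D : Matrix W W ℝ) (k : ℕ) :
    (B + D)^k = B^k + ∑ j ∈ range k, B^j * D * (B+D)^(k-1-j) := by
  induction k with
  | zero => simp
  | succ k ih =>
    rw [pow_succ', add_mul, sum_range_succ']
    nth_rewrite 1 [ih]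
    rw [mul_add, ← pow_succ', mul_sum]
    simp only [pow_zero, one_mul, Nat.add_sub_cancel, Nat.sub_zero, add_assoc]
    congr 2
    refine sum_congr rfl fun j hj => ?_
    rw [pow_succ', show k - (j+1) = k - 1 - j by omega]
    simp only [mul_assoc]

lemma tele_right (B D : Matrix W W ℝ) (k : ℕ) :
    (B + D)^k = B^k + ∑ j ∈ range k, (B+D)^j * D * B^(k-1-j) := by
  have h := tele_left (B + D) (-D) k
  simp only [add_neg_cancel_right, mul_neg, neg_mul, sum_neg_distrib] at h
  rw [h]; abel

/-- The symmetric edge matrix. -/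
def edgeM (u v : W) : Matrix W W ℝ := Matrix.single u v 1 + Matrix.single v u 1

lemma mul_edge_mul (X Y : Matrix W W ℝ) (u v i j : W) :
    (X * edgeM u v * Y) i j = X i u * Y v j + X i v * Y u j := by
  simp only [edgeM, mul_add, add_mul, Matrix.add_apply, mul_assoc]
  congr 1 <;>
  · rw [Matrix.mul_apply]
    rw [Finset.sum_eq_single_of_mem _ (mem_univ _)]
    · rw [Matrix.single_mul_apply_same, one_mul]
    · intro b _ hb
      rw [Matrix.single_mul_apply_of_ne _ _ _ _ _ hb, mul_zero]

lemma pow_col_zero {B : Matrix W W ℝ} {v : W} (hc : ∀ j, B j v = 0) (k : ℕ) (x : W) (hx : x ≠ v) :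
    (B^k) x v = 0 := by
  cases k with
  | zero => simp [hx]
  | succ k => rw [pow_succ, Matrix.mul_apply]; simp [hc]

lemma pow_row_zero {B : Matrix W W ℝ} {v : W} (hc : ∀ j, B v j = 0) (k : ℕ) (x : W) (hx : x ≠ v) :
    (B^k) v x = 0 := by
  cases k with
  | zero => simp [hx.symm]
  | succ k => rw [pow_succ', Matrix.mul_apply]; simp [hc]

section leaf
variable {B : Matrix W W ℝ} {u v : W} (huv : u ≠ v) (hr : ∀ j, B v j = 0) (hc : ∀ j, B j v = 0)
include huv hr hc

lemma leaf_aux (k : ℕ) : ((B + edgeM u v)^(k+1)) v v = ((B + edgeM u v)^k) u v := by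
  rw [pow_succ', add_mul, Matrix.add_apply]
  have := mul_edge_mul 1 ((B + edgeM u v)^k) u v v v
  rw [one_mul] at this
  rw [this, Matrix.mul_apply]
  simp [hr, huv.symm]

lemma leaf_step (k : ℕ) : ((B + edgeM u v)^k) v v = step (fun k => (B^k) u u) k := by
  induction k using Nat.strong_induction_on with
  | _ k ih =>
    match k with
    | 0 => simp [step]
    | 1 =>
      rw [leaf_aux huv hr hc]; simp [step, huv]
    | (k+2) =>
      rw [leaf_aux huv hr hc, tele_left, Matrix.add_apply, Matrix.sum_apply, step_add_two,
        pow_col_zero hc _ _ huv, zero_add]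
      refine sum_congr rfl fun j hj => ?_
      rw [mul_edge_mul, pow_col_zero hc _ _ huv, zero_mul, add_zero, ih _ (by omega)]
      congr 2

lemma leaf_trace (k : ℕ) : ((B + edgeM u v)^(k+1)).trace = (B^(k+1)).trace +
    incr (fun k => ((B + edgeM u v)^k) v v) (fun k => (B^k) u u) k := by
  set A := B + edgeM u v with hA
  have h1 : (A^(k+1)) = B^(k+1) + ∑ j ∈ range (k+1), B^j * edgeM u v * A^(k-j) := by
    rw [hA, tele_left]; rfl
  have key : ∀ X Y : Matrix W W ℝ, (X * edgeM u v * Y).trace = (Y * X) v u + (Y * X) u v := by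
    intro X Y
    simp only [Matrix.trace, Matrix.diag, mul_edge_mul, sum_add_distrib]
    simp only [Matrix.mul_apply]
    congr 1 <;> exact sum_congr rfl fun _ _ => mul_comm _ _
  have h2 : ∀ i j, (A^i * B^j) v u = ∑ l ∈ range i, (A^l) v v * (B^(i-1-l+j)) u u := by
    intro i j
    nth_rewrite 1 [hA]
    rw [tele_right, add_mul, ← pow_add, Matrix.add_apply, pow_row_zero hr _ _ huv, zero_add,
      sum_mul, Matrix.sum_apply]
    refine sum_congr rfl fun l _ => ?_
    rw [mul_assoc, ← pow_add, mul_edge_mul, pow_row_zero hr _ _ huv]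
    simp [hA]
  rw [h1, Matrix.trace_add, Matrix.trace_sum]
  congr 1
  unfold incr
  simp only [key, sum_add_distrib]
  rw [add_comm]
  congr 1
  · rw [sum_range_succ']
    rw [sum_eq_zero]
    · simp [hA, leaf_aux huv hr hc]
    · intro j _
      rw [pow_succ, ← mul_assoc, Matrix.mul_apply]; simp [hc]
  · refine sum_congr rfl fun j hj => ?_
    rw [h2]
    refine sum_congr rfl fun l hl => ?_
    have := mem_range.1 hl
    rw [show k - j - 1 - l + j = k - 1 - l by omega]
end leaf

section coal
variable {A B : Matrix W W ℝ} {S T : Finset W} {v : W}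

lemma pow_supp (hA : ∀ i j, ¬ (i ∈ S ∧ j ∈ S) → A i j = 0) (k : ℕ) (i j : W)
    (h : ¬ (i ∈ S ∧ j ∈ S)) : (A^(k+1)) i j = 0 := by
  by_cases hi : i ∈ S
  · have hj : j ∉ S := fun hj => h ⟨hi, hj⟩
    rw [pow_succ, Matrix.mul_apply]
    exact sum_eq_zero fun x _ => by rw [hA x j (by simp [hj]), mul_zero]
  · rw [pow_succ', Matrix.mul_apply]
    exact sum_eq_zero fun x _ => by rw [hA i x (by simp [hi]), zero_mul]

lemma coal_beta (i : ℕ) {A B : Matrix W W ℝ} {S T : Finset W}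
    (hA : ∀ i j, ¬ (i ∈ S ∧ j ∈ S) → A i j = 0)
    (hB : ∀ i j, ¬ (i ∈ T ∧ j ∈ T) → B i j = 0) (hST : ∀ x, x ∈ S → x ∈ T → x = v) :
    (A * (A+B)^i) v v = beta (fun k => (A^k) v v) (fun k => (B^k) v v) i := by
  induction i using Nat.strong_induction_on generalizing A B S T with
  | _ i ih =>
    rw [tele_left, beta_eq, mul_add, Matrix.add_apply, ← pow_succ', mul_sum, Matrix.sum_apply]
    congr 1
    refine sum_congr rfl fun j hj => ?_
    have := mem_range.1 hj
    rw [← ih (i-1-j) (by omega) hB hA (fun x hx hy => hST x hy hx), ← mul_assoc, ← mul_assoc,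
      ← pow_succ', mul_assoc, Matrix.mul_apply, sum_eq_single_of_mem v (mem_univ _), add_comm A B]
    intro x _ hx
    by_cases hxS : x ∈ S
    · have hxT : x ∉ T := fun h => hx (hST x hxS h)
      rw [Matrix.mul_apply, sum_eq_zero, mul_zero]
      intro y _
      rw [hB x y (by simp [hxT]), zero_mul]
    · rw [pow_supp hA _ _ _ (by simp [hxS]), zero_mul]

/-- Closed walk counts at the glued vertex. -/
noncomputable def coal (x y : ℕ → ℝ) : ℕ → ℝ
  | 0 => 1
  | (k+1) => beta x y k + beta y x k

lemma coal_comm (x y : ℕ → ℝ) (k : ℕ) : coal x y k = coal y x k := by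
  cases k <;> simp [coal, add_comm]

lemma coal_mono {x y x' y' : ℕ → ℝ} (hx : ∀ k, 0 ≤ x k) (hy : ∀ k, 0 ≤ y k)
    (hxx : ∀ k, x k ≤ x' k) (hyy : ∀ k, y k ≤ y' k) (k : ℕ) : coal x y k ≤ coal x' y' k := by
  cases k with
  | zero => simp [coal]
  | succ k => exact add_le_add (beta_mono _ hx hy hxx hyy) (beta_mono _ hy hx hyy hxx)

lemma coal_matrix (k : ℕ) {A B : Matrix W W ℝ} {S T : Finset W}
    (hA : ∀ i j, ¬ (i ∈ S ∧ j ∈ S) → A i j = 0)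
    (hB : ∀ i j, ¬ (i ∈ T ∧ j ∈ T) → B i j = 0) (hST : ∀ x, x ∈ S → x ∈ T → x = v) :
    ((A+B)^k) v v = coal (fun k => (A^k) v v) (fun k => (B^k) v v) k := by
  cases k with
  | zero => simp [coal]
  | succ k =>
    rw [coal, ← coal_beta k hA hB hST, ← coal_beta k hB hA (fun x hx hy => hST x hy hx),
      pow_succ', add_mul, Matrix.add_apply, add_comm B A]
end coal

end PathLEE

namespace PathLEE

open Finset Matrix

variable {W : Type*} [Fintype W] [DecidableEq W]

lemma pow_entry_nonneg {X : Matrix W W ℝ} (hX : ∀ i j, 0 ≤ X i j) (k : ℕ) (i j : W) :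
    0 ≤ (X^k) i j := by
  induction k generalizing i j with
  | zero => rw [pow_zero, Matrix.one_apply]; split_ifs <;> norm_num
  | succ k ih =>
    rw [pow_succ, Matrix.mul_apply]
    exact sum_nonneg fun x _ => mul_nonneg (ih _ _) (hX _ _)

lemma pow_entry_mono {X Y : Matrix W W ℝ} (hX : ∀ i j, 0 ≤ X i j) (hXY : ∀ i j, X i j ≤ Y i j)
    (k : ℕ) (i j : W) : (X^k) i j ≤ (Y^k) i j := by
  induction k generalizing i j with
  | zero => simp
  | succ k ih =>
    rw [pow_succ, Matrix.mul_apply, pow_succ, Matrix.mul_apply]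
    exact sum_le_sum fun x _ => mul_le_mul (ih _ _) (hXY _ _) (hX _ _)
      ((pow_entry_nonneg hX _ _ _).trans (ih _ _))

lemma trace_mono {X Y : Matrix W W ℝ} (hX : ∀ i j, 0 ≤ X i j) (hXY : ∀ i j, X i j ≤ Y i j)
    (k : ℕ) : (X^k).trace ≤ (Y^k).trace :=
  sum_le_sum fun _ _ => pow_entry_mono hX hXY k _ _

/-- restriction of a matrix to a vertex subset -/
def restr (A : Matrix W W ℝ) (S : Finset W) : Matrix W W ℝ :=
  Matrix.of fun i j => if i ∈ S ∧ j ∈ S then A i j else 0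

omit [Fintype W] in
lemma restr_supp (A : Matrix W W ℝ) (S : Finset W) (i j : W) (h : ¬ (i ∈ S ∧ j ∈ S)) :
    restr A S i j = 0 := by simp only [restr, Matrix.of_apply, if_neg h]

omit [Fintype W] in
lemma restr_nonneg {A : Matrix W W ℝ} (hA : ∀ i j, 0 ≤ A i j) (S : Finset W) (i j : W) :
    0 ≤ restr A S i j := by
  simp only [restr, Matrix.of_apply]; split_ifs
  · exact hA _ _
  · exact le_rfl

omit [Fintype W] in
lemma edgeM_apply {u v : W} (huv : u ≠ v) (i j : W) :
    edgeM u v i j = if (i = u ∧ j = v) ∨ (i = v ∧ j = u) then 1 else 0 := by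
  simp only [edgeM, Matrix.add_apply, Matrix.single_apply]
  by_cases h1 : u = i <;> by_cases h2 : v = j <;> by_cases h3 : v = i <;> by_cases h4 : u = j <;>
    simp_all [eq_comm]

/-- Chain lemma: exact formulas for an induced path. -/
lemma chain {C : Matrix W W ℝ} {g : ℕ → W} {N : ℕ}
    (hg : ∀ i < N, ∀ j < N, g i = g j → i = j)
    (hC : ∀ i < N, ∀ j < N, C (g i) (g j) = if i + 1 = j ∨ j + 1 = i then 1 else 0) (m : ℕ)
    (hm : m + 1 ≤ N) :
    (∀ k, ((restr C ((range (m+1)).image g))^k) (g m) (g m) = pw (m+1) k) ∧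
    (∀ k, ((restr C ((range (m+1)).image g))^(k+1)).trace = pt (m+1) k) := by
  induction m with
  | zero =>
    have h0 : restr C ((range (0+1)).image g) = 0 := by
      ext i j
      simp only [restr, Matrix.of_apply, Matrix.zero_apply]
      split_ifs with h
      · simp only [zero_add, range_one, image_singleton, mem_singleton] at h
        rw [h.1, h.2, hC 0 (by omega) 0 (by omega)]; simp
      · rfl
    rw [h0]
    refine ⟨fun k => ?_, fun k => ?_⟩
    · cases k with
      | zero => simp [pw_zero]
      | succ k => simp [pw_one_succ]
    · simp [pt_one]
  | succ m ih =>
    obtain ⟨ih1, ih2⟩ := ih (by omega)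
    set B := restr C ((range (m+1)).image g) with hB
    have hne : g m ≠ g (m+1) := fun h => by
      have := hg m (by omega) (m+1) (by omega) h
      omega
    have hnm : g (m+1) ∉ (range (m+1)).image g := by
      intro h
      obtain ⟨i, hi, h⟩ := mem_image.1 h
      have := mem_range.1 hi
      have := hg i (by omega) (m+1) (by omega) h
      omega
    have hr : ∀ j, B (g (m+1)) j = 0 := fun j => restr_supp _ _ _ _ (by simp only [hnm]; simp)
    have hc : ∀ j, B j (g (m+1)) = 0 := fun j => restr_supp _ _ _ _ (by simp only [hnm]; simp)
    have hS : (range (m+1+1)).image g = insert (g (m+1)) ((range (m+1)).image g) := by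
      rw [range_add_one, image_insert]
    have hdec : restr C ((range (m+1+1)).image g) = B + edgeM (g m) (g (m+1)) := by
      ext i j
      rw [Matrix.add_apply, edgeM_apply hne]
      have hmS : g m ∈ (range (m+1)).image g := mem_image_of_mem _ (by simp)
      have hne' : ∀ x ∈ (range (m+1)).image g, x ≠ g (m+1) := fun x hx h => hnm (h ▸ hx)
      have hCl : ∀ x ∈ (range (m+1)).image g, C x (g (m+1)) = (if x = g m then 1 else 0) ∧
          C (g (m+1)) x = (if x = g m then 1 else 0) := by
        intro x hx
        obtain ⟨a, ha, rfl⟩ := mem_image.1 hx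
        have ha := mem_range.1 ha
        rw [hC a (by omega) (m+1) (by omega), hC (m+1) (by omega) a (by omega)]
        have : g a = g m ↔ a = m := ⟨fun h => hg a (by omega) m (by omega) h, fun h => by rw [h]⟩
        simp only [this]
        constructor <;> congr 1 <;> apply propext <;> omega
      have hCd : C (g (m+1)) (g (m+1)) = 0 := by
        rw [hC (m+1) (by omega) (m+1) (by omega)]; simp
      rw [hB, hS]
      simp only [restr, Matrix.of_apply, mem_insert]
      by_cases hi : i ∈ (range (m+1)).image g <;> by_cases hj : j ∈ (range (m+1)).image g
      · have := hne' i hi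
        have := hne' j hj
        simp [*]
      · have := hne' i hi
        by_cases hj' : j = g (m+1)
        · subst hj'
          rw [if_pos ⟨Or.inr hi, Or.inl rfl⟩, if_neg (fun h => hj h.2), (hCl i hi).1, zero_add]
          simp [this]
        · rw [if_neg (by tauto), if_neg (by tauto), if_neg (by tauto), zero_add]
      · have := hne' j hj
        by_cases hi' : i = g (m+1)
        · subst hi'
          rw [if_pos ⟨Or.inl rfl, Or.inr hj⟩, if_neg (fun h => hi h.1), (hCl j hj).2, zero_add]
          simp [this]
        · rw [if_neg (by tauto), if_neg (by tauto), if_neg (by tauto), zero_add]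
      · by_cases hi' : i = g (m+1) <;> by_cases hj' : j = g (m+1)
        · subst hi'
          subst hj'
          rw [if_pos ⟨Or.inl rfl, Or.inl rfl⟩, if_neg (fun h => hi h.1), hCd, zero_add]
          simp [hne.symm]
        all_goals
          rw [if_neg (by tauto), if_neg (by tauto), if_neg, zero_add]
          rintro (⟨rfl, rfl⟩ | ⟨rfl, rfl⟩) <;> tauto
    have hstep : ∀ k, ((restr C ((range (m+1+1)).image g))^k) (g (m+1)) (g (m+1))
        = pw (m+1+1) k := by
      intro k
      rw [hdec, leaf_step hne hr hc]
      rw [show pw (m+1+1) = step (pw (m+1)) from rfl]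
      congr 1
      exact funext ih1
    refine ⟨hstep, fun k => ?_⟩
    rw [hdec, leaf_trace hne hr hc, ← hdec, ih2]
    rw [show pt (m+1+1) k = pt (m+1) k + incr (pw (m+1+1)) (pw (m+1)) k from rfl]
    congr 2
    · exact funext hstep
    · exact funext ih1

/-- path matrix on `Fin N` -/
def pathM (N : ℕ) : Matrix (Fin N) (Fin N) ℝ :=
  Matrix.of fun i j => if i.val + 1 = j.val ∨ j.val + 1 = i.val then 1 else 0

lemma antidiag {N : ℕ} (X : Matrix (Fin N) (Fin N) ℝ) (hX : pathM N * X = X * pathM N)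
    (i j : ℕ) (h : i + j + 2 < N) :
    X ⟨i+1, by omega⟩ ⟨j+1, by omega⟩ = X ⟨i, by omega⟩ ⟨j, by omega⟩
      + X ⟨0, by omega⟩ ⟨i+j+2, by omega⟩ := by
  have hrow0 : ∀ (hN : 1 < N) (y : Fin N), (pathM N * X) ⟨0, by omega⟩ y = X ⟨1, hN⟩ y := by
    intro hN y
    rw [Matrix.mul_apply, sum_eq_single_of_mem ⟨1, hN⟩ (mem_univ _)]
    · simp [pathM]
    · intro b _ hb
      have : b.val ≠ 1 := fun h => hb (Fin.ext h)
      simp only [pathM, Matrix.of_apply]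
      rw [if_neg (by omega), zero_mul]
  have hrow : ∀ (a : ℕ) (ha : a + 2 < N) (y : Fin N),
      (pathM N * X) ⟨a+1, by omega⟩ y = X ⟨a, by omega⟩ y + X ⟨a+2, ha⟩ y := by
    intro a ha y
    rw [Matrix.mul_apply, sum_eq_add_of_mem (⟨a, by omega⟩ : Fin N) (⟨a+2, ha⟩ : Fin N)
      (mem_univ _) (mem_univ _) (by simp)]
    · simp [pathM]
    · rintro b _ ⟨hb, hb'⟩
      have : b.val ≠ a := fun h => hb (Fin.ext h)
      have : b.val ≠ a+2 := fun h => hb' (Fin.ext h)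
      simp only [pathM, Matrix.of_apply]
      rw [if_neg (by omega), zero_mul]
  have hcol : ∀ (a : ℕ) (ha : a + 2 < N) (y : Fin N),
      (X * pathM N) y ⟨a+1, by omega⟩ = X y ⟨a, by omega⟩ + X y ⟨a+2, ha⟩ := by
    intro a ha y
    rw [Matrix.mul_apply, sum_eq_add_of_mem (⟨a, by omega⟩ : Fin N) (⟨a+2, ha⟩ : Fin N)
      (mem_univ _) (mem_univ _) (by simp)]
    · simp [pathM]
    · rintro b _ ⟨hb, hb'⟩
      have : b.val ≠ a := fun h => hb (Fin.ext h)
      have : b.val ≠ a+2 := fun h => hb' (Fin.ext h)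
      simp only [pathM, Matrix.of_apply]
      rw [if_neg (by omega), mul_zero]
  induction i generalizing j with
  | zero =>
    have h1 := hrow0 (by omega) ⟨j+1, by omega⟩
    rw [hX, hcol j (by omega)] at h1
    simp only [zero_add]
    exact h1.symm
  | succ i ih =>
    have h1 := hrow i (by omega) ⟨j+1, by omega⟩
    rw [hX, hcol j (by omega)] at h1
    have h2 := ih (j+1) (by omega) hrow0 hrow hcol
    have h3 : (⟨i + 1 + j + 2, by omega⟩ : Fin N) = ⟨i + (j+1) + 2, by omega⟩ :=
      Fin.ext (by simp; omega)
    rw [h3]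
    have h4 : (⟨i + 1 + 1, by omega⟩ : Fin N) = ⟨i + 2, by omega⟩ := rfl
    have h5 : (⟨j + 1 + 1, by omega⟩ : Fin N) = ⟨j + 2, by omega⟩ := rfl
    rw [h5] at h2
    rw [h4]
    linarith

lemma pathM_nonneg (N : ℕ) (i j : Fin N) : 0 ≤ pathM N i j := by
  simp only [pathM, Matrix.of_apply]; split_ifs <;> norm_num

lemma path_diag_ge {N : ℕ} (k i : ℕ) (h : 2 * i < N) :
    (pathM N ^ k) ⟨0, by omega⟩ ⟨0, by omega⟩ ≤ (pathM N ^ k) ⟨i, by omega⟩ ⟨i, by omega⟩ := by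
  induction i with
  | zero => exact le_rfl
  | succ i ih =>
    refine (ih (by omega)).trans ?_
    rw [antidiag (pathM N ^ k) (by rw [← pow_succ, ← pow_succ']) i i (by omega)]
    linarith [pow_entry_nonneg (pathM_nonneg N) k ⟨0, by omega⟩ ⟨i+i+2, by omega⟩]

/-- Gluing two paths end to end beats a path at the end. `a+1`, `b+1` vertices. -/
lemma coal_path_aux (a b k : ℕ) (hab : a ≤ b) :
    pw (a+b+1) k ≤ coal (pw (a+1)) (pw (b+1)) k := by
  set N := a + b + 1 with hN
  let g : ℕ → Fin N := fun i => if h : i < N then ⟨i, h⟩ else ⟨0, by omega⟩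
  let g' : ℕ → Fin N := fun i => if h : i < N then ⟨N - 1 - i, by omega⟩ else ⟨0, by omega⟩
  have hgv : ∀ i < N, (g i).val = i := fun i hi => by simp [g, hi]
  have hgv' : ∀ i < N, (g' i).val = N - 1 - i := fun i hi => by simp [g', hi]
  have hg : ∀ i < N, ∀ j < N, g i = g j → i = j := fun i hi j hj h => by
    have := congrArg Fin.val h
    rwa [hgv i hi, hgv j hj] at this
  have hg' : ∀ i < N, ∀ j < N, g' i = g' j → i = j := fun i hi j hj h => by
    have := congrArg Fin.val h
    rw [hgv' i hi, hgv' j hj] at this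
    omega
  have hC : ∀ i < N, ∀ j < N, pathM N (g i) (g j) = if i + 1 = j ∨ j + 1 = i then 1 else 0 := by
    intro i hi j hj
    simp only [pathM, Matrix.of_apply, hgv i hi, hgv j hj]
  have hC' : ∀ i < N, ∀ j < N, pathM N (g' i) (g' j) = if i + 1 = j ∨ j + 1 = i then 1 else 0 := by
    intro i hi j hj
    simp only [pathM, Matrix.of_apply, hgv' i hi, hgv' j hj]
    congr 1
    apply propext
    omega
  have h1 := (chain hg hC a (by omega)).1
  have h2 := (chain hg' hC' b (by omega)).1
  have h3 := (chain hg' hC' (a+b) (by omega)).1 k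
  have hmem : ∀ m, m < N → ∀ x : Fin N, x ∈ (range (m+1)).image g ↔ x.val ≤ m := by
    intro m hm x
    simp only [mem_image, mem_range]
    constructor
    · rintro ⟨i, hi, rfl⟩
      rw [hgv i (by omega)]; omega
    · intro h
      exact ⟨x.val, by omega, Fin.ext (hgv _ (by omega))⟩
  have hmem' : ∀ m, m < N → ∀ x : Fin N, x ∈ (range (m+1)).image g' ↔ N - 1 - m ≤ x.val := by
    intro m hm x
    simp only [mem_image, mem_range]
    constructor
    · rintro ⟨i, hi, rfl⟩
      rw [hgv' i (by omega)]; omega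
    · intro h
      exact ⟨N - 1 - x.val, by omega, Fin.ext (by rw [hgv' _ (by omega)]; omega)⟩
  have hfull : restr (pathM N) ((range (a+b+1)).image g') = pathM N := by
    ext i j
    simp only [restr, Matrix.of_apply, hmem' (a+b) (by omega)]
    rw [if_pos (by omega)]
  have hga : g a = ⟨a, by omega⟩ := Fin.ext (hgv a (by omega))
  have hgb : g' b = ⟨a, by omega⟩ := Fin.ext (by rw [hgv' b (by omega)]; simp; omega)
  have hg0 : g' (a+b) = ⟨0, by omega⟩ := Fin.ext (by rw [hgv' _ (by omega)]; simp; omega)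
  have hsum : restr (pathM N) ((range (a+1)).image g) + restr (pathM N) ((range (b+1)).image g')
      = pathM N := by
    ext i j
    simp only [Matrix.add_apply, restr, Matrix.of_apply, hmem' b (by omega), hmem a (by omega),
      pathM]
    split_ifs <;> first | omega | norm_num
  have h4 := coal_matrix (v := (⟨a, by omega⟩ : Fin N)) k
    (restr_supp (pathM N) ((range (a+1)).image g))
    (restr_supp (pathM N) ((range (b+1)).image g')) (by
      intro x hx hy
      rw [hmem a (by omega)] at hx
      rw [hmem' b (by omega)] at hy
      exact Fin.ext (by simp; omega))
  rw [hga] at h1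
  rw [hgb] at h2
  rw [hsum, funext h1, funext h2] at h4
  rw [hg0, hfull] at h3
  rw [← h3, ← h4]
  exact path_diag_ge k a (by omega)

lemma coal_path (a b k : ℕ) : pw (a+b+1) k ≤ coal (pw (a+1)) (pw (b+1)) k := by
  rcases le_total a b with h | h
  · exact coal_path_aux a b k h
  · rw [coal_comm, add_comm a b]
    exact coal_path_aux b a k h

/-- Rooted vertex sets built by adding a new root or gluing at the root. -/
inductive Good (A : Matrix W W ℝ) : Finset W → W → Prop
  | single (v : W) : Good A {v} v
  | step (S : Finset W) (u v : W) : Good A S u → v ∉ S → A u v = 1 → Good A (insert v S) v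
  | merge (S T : Finset W) (v : W) : Good A S v → Good A T v → (∀ x, x ∈ S → x ∈ T → x = v) →
      Good A (S ∪ T) v

section good
variable {A : Matrix W W ℝ}

omit [Fintype W] in
lemma Good.mem {S : Finset W} {v : W} (h : Good A S v) : v ∈ S := by
  induction h with
  | single v => simp
  | step S u v _ _ _ _ => simp
  | merge S T v _ _ _ ih _ => simp [ih]

omit [Fintype W] in
lemma Good.extend (hs : ∀ i j, A i j = A j i) {S : Finset W} {v : W} (h : Good A S v) {x y : W}
    (hx : x ∈ S) (hy : y ∉ S) (hxy : A x y = 1) : Good A (insert y S) v := by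
  have pair : ∀ z, z ≠ y → A z y = 1 → Good A (insert z {y}) z := fun z hz h =>
    Good.step {y} y z (Good.single y) (by simpa using hz) (by rw [hs]; exact h)
  induction h with
  | single v =>
    have : x = v := by simpa using hx
    subst this
    rw [Finset.pair_comm]
    exact pair x (fun h => hy (by simp [h])) hxy
  | step S u v hS hv huv ih =>
    rcases mem_insert.1 hx with rfl | hx
    · have h1 := Good.merge _ _ _ (Good.step S u x hS hv huv)
        (pair x (fun h => hy (by simp [h])) hxy) (by
          intro z hz hz'
          rcases mem_insert.1 hz' with h | h
          · exact h
          · rw [mem_singleton] at h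
            subst h
            exact absurd hz hy)
      convert h1 using 1
      ext z; simp; tauto
    · have hyS : y ∉ S := fun h => hy (mem_insert_of_mem h)
      have := Good.step _ u v (ih hx hyS) (by
        intro h
        rcases mem_insert.1 h with h | h
        · exact hy (by simp [h])
        · exact hv h) huv
      rwa [Finset.insert_comm] at this
  | merge S T v hS hT hST ihS ihT =>
    have hyS : y ∉ S := fun h => hy (mem_union_left _ h)
    have hyT : y ∉ T := fun h => hy (mem_union_right _ h)
    rcases mem_union.1 hx with hx | hx
    · have := Good.merge _ _ _ (ihS hx hyS) hT (by
        intro z hz hz'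
        rcases mem_insert.1 hz with rfl | h
        · exact absurd hz' hyT
        · exact hST z h hz')
      rwa [Finset.insert_union] at this
    · have := Good.merge _ _ _ hS (ihT hx hyT) (by
        intro z hz hz'
        rcases mem_insert.1 hz' with rfl | h
        · exact absurd hz hyS
        · exact hST z hz h)
      rwa [Finset.union_insert] at this

variable (h0 : ∀ i j, 0 ≤ A i j) (hs : ∀ i j, A i j = A j i)

omit [Fintype W] in
include h0 hs in
lemma restr_insert_ge {S : Finset W} {u v : W} (hu : u ∈ S) (hv : v ∉ S) (huv : A u v = 1)
    (i j : W) : (restr A S + edgeM u v) i j ≤ restr A (insert v S) i j := by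
  have hne : u ≠ v := fun h => hv (h ▸ hu)
  rw [Matrix.add_apply, edgeM_apply hne]
  by_cases h : (i = u ∧ j = v) ∨ (i = v ∧ j = u)
  · rw [if_pos h, restr_supp, restr]
    · rcases h with ⟨rfl, rfl⟩ | ⟨rfl, rfl⟩
      · simp [hu, huv]
      · simp [hu, hs i j, huv]
    · rcases h with ⟨rfl, rfl⟩ | ⟨rfl, rfl⟩ <;> simp [hv]
  · rw [if_neg h, add_zero]
    simp only [restr, Matrix.of_apply]
    split_ifs with h1 h2 h2
    · exact le_rfl
    · exact absurd ⟨mem_insert_of_mem h1.1, mem_insert_of_mem h1.2⟩ h2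
    · exact h0 _ _
    · exact le_rfl

omit [Fintype W] in
lemma sum_edge_nonneg {B : Matrix W W ℝ} (hB : ∀ i j, 0 ≤ B i j) {u v : W} (hne : u ≠ v) (i j : W) :
    0 ≤ (B + edgeM u v) i j := by
  rw [Matrix.add_apply, edgeM_apply hne]
  have := hB i j
  split_ifs <;> linarith

include h0 hs in
lemma Good.ge (hd : ∀ i, A i i = 0) {S : Finset W} {v : W} (h : Good A S v) (k : ℕ) :
    pw S.card k ≤ ((restr A S)^k) v v := by
  induction h generalizing k with
  | single v =>
    rw [card_singleton]
    cases k with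
    | zero => simp [pw_zero]
    | succ k => rw [pw_one_succ]; exact pow_entry_nonneg (restr_nonneg h0 _) _ _ _
  | step S u v hS hv huv ih =>
    have hne : u ≠ v := fun h => hv (h ▸ hS.mem)
    rw [card_insert_of_notMem hv]
    refine le_trans ?_ (pow_entry_mono (sum_edge_nonneg (restr_nonneg h0 S) hne)
      (restr_insert_ge h0 hs hS.mem hv huv) k v v)
    rw [leaf_step hne (fun j => restr_supp _ _ _ _ (by simp [hv]))
      (fun j => restr_supp _ _ _ _ (by simp [hv]))]
    exact step_mono (pw_nonneg _) ih k
  | merge S T v hS hT hST ihS ihT =>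
    have hcard : (S ∪ T).card = (S.card - 1) + (T.card - 1) + 1 := by
      have h1 := card_union_add_card_inter S T
      have h2 : S ∩ T = {v} := by
        ext x
        simp only [mem_inter, mem_singleton]
        exact ⟨fun h => hST x h.1 h.2, fun h => h ▸ ⟨hS.mem, hT.mem⟩⟩
      rw [h2, card_singleton] at h1
      have := card_pos.2 ⟨v, hS.mem⟩
      have := card_pos.2 ⟨v, hT.mem⟩
      omega
    rw [hcard]
    refine (coal_path _ _ k).trans ?_
    rw [Nat.sub_add_cancel (card_pos.2 ⟨v, hS.mem⟩), Nat.sub_add_cancel (card_pos.2 ⟨v, hT.mem⟩)]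
    refine (coal_mono (pw_nonneg _) (pw_nonneg _) ihS ihT k).trans ?_
    rw [← coal_matrix k (restr_supp A S) (restr_supp A T) hST]
    refine pow_entry_mono (fun i j => add_nonneg (restr_nonneg h0 _ _ _) (restr_nonneg h0 _ _ _))
      (fun i j => ?_) k v v
    change restr A S i j + restr A T i j ≤ restr A (S ∪ T) i j
    simp only [restr, Matrix.of_apply, mem_union]
    have := h0 i j
    split_ifs with h1 h2 h3
    · have e1 := hST i h1.1 h2.1
      have e2 := hST j h1.2 h2.2
      rw [e1, e2, hd]; simp
    all_goals first | linarith | tauto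

/-- Connected vertex sets. -/
inductive Conn (A : Matrix W W ℝ) : Finset W → Prop
  | single (v : W) : Conn A {v}
  | grow (S : Finset W) (x y : W) : Conn A S → x ∈ S → y ∉ S → A x y = 1 → Conn A (insert y S)

omit [Fintype W] in
include hs in
lemma Conn.good {S : Finset W} (h : Conn A S) : ∀ v ∈ S, Good A S v := by
  induction h with
  | single v =>
    intro w hw
    rw [mem_singleton.1 hw]
    exact Good.single v
  | grow S x y _ hx hy hxy ih =>
    intro v hv
    rcases mem_insert.1 hv with rfl | hv
    · exact Good.step S x v (ih x hx) hy hxy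
    · exact (ih v hv).extend hs hx hy hxy

include h0 hs in
lemma Conn.ge (hd : ∀ i, A i i = 0) {S : Finset W} (h : Conn A S) (k : ℕ) :
    pt S.card k ≤ ((restr A S)^(k+1)).trace := by
  induction h with
  | single v =>
    rw [card_singleton, pt_one]
    exact sum_nonneg fun _ _ => pow_entry_nonneg (restr_nonneg h0 _) _ _ _
  | grow S x y hS hx hy hxy ih =>
    have hne : x ≠ y := fun h => hy (h ▸ hx)
    rw [card_insert_of_notMem hy]
    refine le_trans ?_ (trace_mono (sum_edge_nonneg (restr_nonneg h0 S) hne)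
      (restr_insert_ge h0 hs hx hy hxy) (k+1))
    have hr : ∀ j, restr A S y j = 0 := fun j => restr_supp _ _ _ _ (by simp [hy])
    have hc : ∀ j, restr A S j y = 0 := fun j => restr_supp _ _ _ _ (by simp [hy])
    rw [leaf_trace hne hr hc, funext (leaf_step hne hr hc)]
    have hb := Good.ge h0 hs hd (hS.good hs x hx)
    exact add_le_add ih (incr_mono (pw_nonneg _) (pw_nonneg _)
      (fun k => step_mono (pw_nonneg _) hb k) hb k)

end good

end PathLEE

namespace PathLEE

open Finset Matrix

section blocks
variable {V F : Type*} [Fintype V] [DecidableEq V] [Fintype F] [DecidableEq F]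

/-- adjacency matrix of a bipartite graph from its biadjacency matrix -/
def bip (B : Matrix V F ℝ) : Matrix (V ⊕ F) (V ⊕ F) ℝ := Matrix.fromBlocks 0 B Bᵀ 0

lemma bip_pow (B : Matrix V F ℝ) (k : ℕ) :
    (bip B)^(2*k) = Matrix.fromBlocks ((B * Bᵀ)^k) 0 0 ((Bᵀ * B)^k) := by
  rw [pow_mul]
  have : (bip B)^2 = Matrix.fromBlocks (B * Bᵀ) 0 0 (Bᵀ * B) := by
    rw [pow_two, bip, Matrix.fromBlocks_multiply]; simp
  rw [this]
  induction k with
  | zero => simp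
  | succ k ih => rw [pow_succ, ih, Matrix.fromBlocks_multiply]; simp [pow_succ]

lemma bip_trace (B : Matrix V F ℝ) (k : ℕ) :
    ((bip B)^(2*(k+1))).trace = 2 * ((B * Bᵀ)^(k+1)).trace := by
  have htr : ∀ (P : Matrix V V ℝ) (Q : Matrix F F ℝ),
      (Matrix.fromBlocks P 0 0 Q).trace = P.trace + Q.trace := by
    intro P Q
    simp [Matrix.trace, Fintype.sum_sum_type]
  rw [bip_pow, htr, two_mul]
  congr 1
  have h : ∀ k, (Bᵀ * B)^(k+1) = Bᵀ * (B * Bᵀ)^k * B := by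
    intro k
    induction k with
    | zero => simp
    | succ k ih => rw [pow_succ, ih, pow_succ (B * Bᵀ)]; simp only [Matrix.mul_assoc]
  rw [h, Matrix.trace_mul_comm, ← Matrix.mul_assoc, ← pow_succ']

end blocks

variable {V : Type*} [Fintype V] [DecidableEq V] (G : SimpleGraph V) [DecidableRel G.Adj]

lemma lap_trace (e : V → ℝ) (he : ∀ v, e v * e v = 1) (hadj : ∀ u v, G.Adj u v → e u * e v = -1)
    (k : ℕ) : ((G.lapMatrix ℝ)^k).trace = ((G.incMatrix ℝ * (G.incMatrix ℝ)ᵀ)^k).trace := by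
  set D : Matrix V V ℝ := Matrix.diagonal e
  have hDD : D * D = 1 := by
    rw [Matrix.diagonal_mul_diagonal, ← Matrix.diagonal_one]
    congr 1; exact funext he
  have hQ : G.incMatrix ℝ * (G.incMatrix ℝ)ᵀ = D * G.lapMatrix ℝ * D := by
    ext i j
    rw [SimpleGraph.incMatrix_mul_transpose, Matrix.mul_diagonal, Matrix.diagonal_mul]
    simp only [Matrix.of_apply, SimpleGraph.lapMatrix, Matrix.sub_apply, SimpleGraph.degMatrix,
      Matrix.diagonal_apply, SimpleGraph.adjMatrix_apply]
    by_cases hij : i = j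
    · subst hij
      simp only [if_true, SimpleGraph.irrefl, if_false, sub_zero]
      rw [mul_comm, ← mul_assoc, he, one_mul]
    · by_cases ha : G.Adj i j
      · simp only [hij, ha, if_false, if_true, zero_sub]
        linarith [hadj i j ha]
      · simp [hij, ha]
  have hP : ∀ k, (D * G.lapMatrix ℝ * D)^k = D * (G.lapMatrix ℝ)^k * D := by
    intro k
    induction k with
    | zero => simp [hDD]
    | succ k ih =>
      rw [pow_succ, ih, pow_succ]
      calc D * G.lapMatrix ℝ ^ k * D * (D * G.lapMatrix ℝ * D)
          = D * G.lapMatrix ℝ ^ k * (D * D) * (G.lapMatrix ℝ * D) := by simp only [mul_assoc]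
        _ = _ := by rw [hDD]; simp only [mul_assoc, mul_one]
  rw [hQ, hP, Matrix.trace_mul_comm, ← mul_assoc, hDD, one_mul]

lemma exists_sign (h : G.Colorable 2) : ∃ e : V → ℝ, (∀ v, e v * e v = 1) ∧
    ∀ u v, G.Adj u v → e u * e v = -1 := by
  obtain ⟨c⟩ := h
  refine ⟨fun v => if c v = 0 then 1 else -1, fun v => ?_, fun u v huv => ?_⟩
  · dsimp only; split_ifs <;> norm_num
  · have := c.valid huv
    dsimp only
    generalize c u = a at *
    generalize c v = b at *
    fin_cases a <;> fin_cases b <;> simp_all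

lemma bip_inc (a : V) (e : Sym2 V) : bip (G.incMatrix ℝ) (Sum.inl a) (Sum.inr e)
    = if e ∈ G.edgeSet ∧ a ∈ e then 1 else 0 := by
  simp only [bip, Matrix.fromBlocks_apply₁₂, SimpleGraph.incMatrix_apply']
  rfl

omit [Fintype V] in
lemma bip_symm {F : Type*} (B : Matrix V F ℝ) (i j : V ⊕ F) : bip B i j = bip B j i := by
  cases i <;> cases j <;> simp [bip]

/-- vertices of the subdivision graph -/
def subd : Finset (V ⊕ Sym2 V) :=
  (univ : Finset V).disjSum G.edgeFinset

lemma mem_subd_inl (v : V) : Sum.inl v ∈ subd G := by simp [subd]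
lemma mem_subd_inr (e : Sym2 V) : Sum.inr e ∈ subd G ↔ e ∈ G.edgeSet := by simp [subd]

lemma card_subd : (subd G).card = Fintype.card V + G.edgeFinset.card := by
  rw [subd, card_disjSum, card_univ]

lemma restr_subd : restr (bip (G.incMatrix ℝ)) (subd G) = bip (G.incMatrix ℝ) := by
  ext x y
  simp only [restr, Matrix.of_apply]
  split_ifs with h
  · rfl
  · cases x with
    | inl a =>
      cases y with
      | inl b => simp [bip]
      | inr e =>
        rw [mem_subd_inr] at h
        rw [bip_inc, if_neg]
        exact fun h' => h ⟨mem_subd_inl G a, h'.1⟩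
    | inr e =>
      cases y with
      | inl b =>
        rw [mem_subd_inr] at h
        rw [bip_symm, bip_inc, if_neg]
        exact fun h' => h ⟨h'.1, mem_subd_inl G b⟩
      | inr e => simp [bip]

lemma conn_subd (hG : G.Connected) : Conn (bip (G.incMatrix ℝ)) (subd G) := by
  classical
  obtain ⟨v0⟩ := hG.nonempty
  set M := bip (G.incMatrix ℝ) with hM
  have hne : ((subd G).powerset.filter fun T => Conn M T).Nonempty :=
    ⟨{Sum.inl v0}, by simp [mem_subd_inl, Conn.single]⟩
  obtain ⟨T, hT, hmax⟩ := exists_max_image _ card hne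
  rw [mem_filter, mem_powerset] at hT
  have hcl : ∀ x ∈ T, ∀ y ∈ subd G, M x y = 1 → y ∈ T := by
    intro x hx y hy hxy
    by_contra hyT
    have h1 := hmax (insert y T) (by
      rw [mem_filter, mem_powerset]
      exact ⟨insert_subset hy hT.1, Conn.grow T x y hT.2 hx hyT hxy⟩)
    rw [card_insert_of_notMem hyT] at h1
    omega
  have hV : ∀ u w, G.Adj u w → Sum.inl u ∈ T → Sum.inr s(u,w) ∈ T ∧ Sum.inl w ∈ T := by
    intro u w huw hu
    have h1 : Sum.inr s(u,w) ∈ T := hcl _ hu _ ((mem_subd_inr G _).2 huw)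
      (by rw [hM, bip_inc, if_pos ⟨huw, by simp⟩])
    exact ⟨h1, hcl _ h1 _ (mem_subd_inl G w)
      (by rw [hM, bip_symm, bip_inc, if_pos ⟨huw, by simp⟩])⟩
  have hex : ∃ v, Sum.inl v ∈ T := by
    have hTne : T.Nonempty := by cases hT.2 <;> simp
    obtain ⟨x, hx⟩ := hTne
    cases x with
    | inl v => exact ⟨v, hx⟩
    | inr e =>
      have he := (mem_subd_inr G e).1 (hT.1 hx)
      induction e with
      | _ a b =>
        exact ⟨a, hcl _ hx _ (mem_subd_inl G a) (by rw [hM, bip_symm, bip_inc, if_pos ⟨he, by simp⟩])⟩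
  obtain ⟨v, hv⟩ := hex
  have hall : ∀ w, Sum.inl w ∈ T := by
    intro w
    obtain ⟨p⟩ := hG.preconnected v w
    induction p with
    | nil => exact hv
    | cons h p ih => exact ih (hV _ _ h hv).2
  have : T = subd G := by
    refine subset_antisymm hT.1 fun x hx => ?_
    cases x with
    | inl w => exact hall w
    | inr e =>
      have he := (mem_subd_inr G e).1 hx
      induction e with
      | _ a b => exact (hV a b he (hall a)).1
  rw [← this]
  exact hT.2

lemma tree_trace_ge (hG : G.IsTree) (k : ℕ) :
    pt (2 * Fintype.card V - 1) (2*k+1) ≤ 2 * ((G.lapMatrix ℝ)^(k+1)).trace := by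
  obtain ⟨e, he, hadj⟩ := exists_sign G hG.colorable_two
  rw [lap_trace G e he hadj, ← bip_trace, show 2 * (k+1) = (2*k+1)+1 by ring, ← restr_subd]
  have hc : (subd G).card = 2 * Fintype.card V - 1 := by
    rw [card_subd]
    have := hG.card_edgeFinset
    omega
  rw [← hc]
  refine Conn.ge ?_ (bip_symm _) ?_ (conn_subd G hG.connected) _
  · intro i j
    cases i <;> cases j
    · simp [bip]
    · rw [bip_inc]; split_ifs <;> norm_num
    · rw [bip_symm, bip_inc]; split_ifs <;> norm_num
    · simp [bip]
  · intro i
    cases i <;> simp [bip]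

lemma path_trace_eq (m : ℕ) (G : SimpleGraph (Fin (m+2))) (hG : G = SimpleGraph.pathGraph (m+2))
    [DecidableRel G.Adj] (k : ℕ) :
    pt (2 * (m+2) - 1) (2*k+1) = 2 * ((G.lapMatrix ℝ)^(k+1)).trace := by
  have hcol : G.Colorable 2 := hG ▸ (SimpleGraph.pathGraph.bicoloring (m+2)).colorable
  obtain ⟨e, he, hadj⟩ := exists_sign G hcol
  rw [lap_trace G e he hadj, ← bip_trace, show 2 * (k+1) = (2*k+1)+1 by ring, ← restr_subd]
  let f : ℕ → Fin (m+2) := fun i => if h : i < m+2 then ⟨i, h⟩ else 0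
  have hf : ∀ i < m+2, (f i).val = i := fun i hi => by simp [f, hi]
  let g : ℕ → Fin (m+2) ⊕ Sym2 (Fin (m+2)) := fun i =>
    if i % 2 = 0 then Sum.inl (f (i/2)) else Sum.inr s(f (i/2), f (i/2+1))
  have hg0 : ∀ i, i % 2 = 0 → g i = Sum.inl (f (i/2)) := fun i hi => by simp [g, hi]
  have hg1 : ∀ i, i % 2 ≠ 0 → g i = Sum.inr s(f (i/2), f (i/2+1)) := fun i hi => by simp [g, hi]
  have hfi : ∀ i < m+2, ∀ j < m+2, f i = f j ↔ i = j := fun i hi j hj =>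
    ⟨fun h => by rw [← hf i hi, h, hf j hj], fun h => by rw [h]⟩
  have hfadj : ∀ i < m+1, G.Adj (f i) (f (i+1)) := fun i hi => by
    rw [hG, SimpleGraph.pathGraph_adj, hf i (by omega), hf (i+1) (by omega)]; simp
  have hinj : ∀ i < 2*m+3, ∀ j < 2*m+3, g i = g j → i = j := by
    intro i hi j hj h
    by_cases h1 : i % 2 = 0 <;> by_cases h2 : j % 2 = 0
    · rw [hg0 i h1, hg0 j h2, Sum.inl.injEq, hfi _ (by omega) _ (by omega)] at h
      omega
    · rw [hg0 i h1, hg1 j h2] at h; simp at h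
    · rw [hg1 i h1, hg0 j h2] at h; simp at h
    · rw [hg1 i h1, hg1 j h2, Sum.inr.injEq, Sym2.eq_iff, hfi _ (by omega) _ (by omega),
        hfi _ (by omega) _ (by omega), hfi _ (by omega) _ (by omega),
        hfi _ (by omega) _ (by omega)] at h
      omega
  have hmix : ∀ i < 2*m+3, ∀ j < 2*m+3, i % 2 = 0 → j % 2 ≠ 0 →
      bip (G.incMatrix ℝ) (g i) (g j) = if i + 1 = j ∨ j + 1 = i then 1 else 0 := by
    intro i hi j hj h1 h2
    rw [hg0 i h1, hg1 j h2, bip_inc]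
    congr 1
    rw [SimpleGraph.mem_edgeSet, Sym2.mem_iff, hfi _ (by omega) _ (by omega),
        hfi _ (by omega) _ (by omega)]
    have := hfadj (j/2) (by omega)
    simp only [this, true_and]
    apply propext
    omega
  have hC : ∀ i < 2*m+3, ∀ j < 2*m+3, bip (G.incMatrix ℝ) (g i) (g j)
      = if i + 1 = j ∨ j + 1 = i then 1 else 0 := by
    intro i hi j hj
    by_cases h1 : i % 2 = 0 <;> by_cases h2 : j % 2 = 0
    · rw [if_neg (by omega), hg0 i h1, hg0 j h2]; simp [bip]
    · exact hmix i hi j hj h1 h2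
    · rw [bip_symm, hmix j hj i hi h2 h1]
      congr 1
      apply propext
      omega
    · rw [if_neg (by omega), hg1 i h1, hg1 j h2]; simp [bip]
  have hS : (range (2*m+2+1)).image g = subd G := by
    ext x
    simp only [mem_image, mem_range]
    constructor
    · rintro ⟨i, hi, rfl⟩
      by_cases h1 : i % 2 = 0
      · rw [hg0 i h1]; exact mem_subd_inl _ _
      · rw [hg1 i h1, mem_subd_inr]; exact hfadj _ (by omega)
    · intro hx
      cases x with
      | inl v =>
        refine ⟨2 * v.val, by omega, ?_⟩
        rw [hg0 _ (by omega), Sum.inl.injEq]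
        apply Fin.ext
        rw [hf _ (by omega)]; omega
      | inr e =>
        rw [mem_subd_inr] at hx
        induction e with
        | _ a b =>
          rw [SimpleGraph.mem_edgeSet, hG, SimpleGraph.pathGraph_adj] at hx
          rcases hx with hx | hx
          · refine ⟨2 * a.val + 1, by omega, ?_⟩
            rw [hg1 _ (by omega), Sum.inr.injEq, Sym2.eq_iff]
            left
            constructor <;> apply Fin.ext <;> rw [hf _ (by omega)] <;> omega
          · refine ⟨2 * b.val + 1, by omega, ?_⟩
            rw [hg1 _ (by omega), Sum.inr.injEq, Sym2.eq_iff]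
            right
            constructor <;> apply Fin.ext <;> rw [hf _ (by omega)] <;> omega
  have := (chain hinj hC (2*m+2) (by omega)).2 (2*k+1)
  rw [hS] at this
  rw [this]
  congr 1

end PathLEE

namespace PathLEE

open Finset Matrix

section series
variable {V : Type*} [Fintype V] [DecidableEq V]

lemma trace_pow_eq {A : Matrix V V ℝ} (hA : A.IsHermitian) (k : ℕ) :
    (A^k).trace = ∑ i, hA.eigenvalues i ^ k := by
  conv_lhs => rw [hA.spectral_theorem]
  rw [← map_pow, Unitary.conjStarAlgAut_apply, Matrix.trace_mul_cycle,
    Unitary.coe_star_mul_self, one_mul, Matrix.diagonal_pow, Matrix.trace_diagonal]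
  rfl

lemma hasSum_trace {A : Matrix V V ℝ} (hA : A.IsHermitian) :
    HasSum (fun k : ℕ => (A^k).trace / (k.factorial : ℝ)) (∑ i, Real.exp (hA.eigenvalues i)) := by
  simp only [trace_pow_eq hA, Finset.sum_div]
  apply hasSum_sum
  intro i _
  rw [Real.exp_eq_exp_ℝ]
  exact NormedSpace.expSeries_div_hasSum_exp _

end series

section deg
variable {V : Type*} [Fintype V] [DecidableEq V] (G : SimpleGraph V) [DecidableRel G.Adj]

lemma trace_lap_sq : ((G.lapMatrix ℝ)^2).trace = ∑ v, ((G.degree v : ℝ)^2 + G.degree v) := by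
  rw [pow_two, Matrix.trace]
  refine Finset.sum_congr rfl fun v _ => ?_
  rw [Matrix.diag_apply, Matrix.mul_apply]
  have : ∀ w, G.lapMatrix ℝ v w * G.lapMatrix ℝ w v
      = (if v = w then (G.degree v : ℝ)^2 else 0) + if G.Adj v w then 1 else 0 := by
    intro w
    simp only [SimpleGraph.lapMatrix, Matrix.sub_apply, SimpleGraph.degMatrix,
      Matrix.diagonal_apply, SimpleGraph.adjMatrix_apply]
    by_cases h : v = w
    · subst h; simp [pow_two]
    · have h' : w ≠ v := fun e => h e.symm
      simp only [h, h', G.adj_comm w v, if_false]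
      split_ifs <;> norm_num
  simp only [this, Finset.sum_add_distrib]
  congr 1
  · simp
  · simp [← SimpleGraph.card_neighborFinset_eq_degree, SimpleGraph.neighborFinset_eq_filter]

lemma tree_sq (hG : G.IsTree) (u : V) (hu : 3 ≤ G.degree u) :
    6 * (Fintype.card V : ℝ) - 8 < ((G.lapMatrix ℝ)^2).trace := by
  rw [trace_lap_sq]
  have h1 : ∑ v, (G.degree v : ℝ) = 2 * ((Fintype.card V : ℝ) - 1) := by
    have := G.sum_degrees_eq_twice_card_edges
    have h2 := hG.card_edgeFinset
    rw [← h2]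
    push_cast
    rw [add_sub_cancel_right]
    exact_mod_cast this
  have h3 : 0 < ∑ v, ((G.degree v : ℝ) - 1) * ((G.degree v : ℝ) - 2) := by
    refine Finset.sum_pos' (fun v _ => ?_) ⟨u, mem_univ _, ?_⟩
    · rcases Nat.lt_or_ge (G.degree v) 2 with h | h
      · have : (G.degree v : ℝ) ≤ 1 := by exact_mod_cast Nat.lt_succ_iff.1 h
        nlinarith
      · have : (2:ℝ) ≤ G.degree v := by exact_mod_cast h
        nlinarith
    · have : (3:ℝ) ≤ G.degree u := by exact_mod_cast hu
      nlinarith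
  have h4 : ∑ v, ((G.degree v : ℝ)^2 + G.degree v)
      = ∑ v, ((G.degree v : ℝ) - 1) * ((G.degree v : ℝ) - 2) + 4 * ∑ v, (G.degree v : ℝ)
        - 2 * Fintype.card V := by
    have : (2 * Fintype.card V : ℝ) = ∑ v : V, (2:ℝ) := by simp [mul_comm]
    rw [this, Finset.mul_sum, ← Finset.sum_add_distrib, ← Finset.sum_sub_distrib]
    refine Finset.sum_congr rfl fun v _ => ?_
    ring
  rw [h4, h1]
  linarith

lemma path_sq (m : ℕ) (G : SimpleGraph (Fin (m+2))) (hG : G = SimpleGraph.pathGraph (m+2))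
    [DecidableRel G.Adj] : ((G.lapMatrix ℝ)^2).trace ≤ 6 * ((m+2 : ℕ) : ℝ) - 8 := by
  rw [trace_lap_sq, Fin.sum_univ_succ, Fin.sum_univ_castSucc]
  have hadj : ∀ a b, G.Adj a b ↔ a.val + 1 = b.val ∨ b.val + 1 = a.val := fun a b => by
    rw [hG, SimpleGraph.pathGraph_adj]
  have h0 : (G.degree 0 : ℝ) ≤ 1 := by
    have : G.degree 0 ≤ ({1} : Finset (Fin (m+2))).card := by
      apply Finset.card_le_card
      intro w hw
      rw [SimpleGraph.mem_neighborFinset, hadj] at hw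
      simp only [mem_singleton, Fin.ext_iff, Fin.val_one, Fin.val_zero] at *
      omega
    exact_mod_cast this
  have h1 : (G.degree (Fin.last m).succ : ℝ) ≤ 1 := by
    have : G.degree (Fin.last m).succ ≤ ({⟨m, by omega⟩} : Finset (Fin (m+2))).card := by
      apply Finset.card_le_card
      intro w hw
      rw [SimpleGraph.mem_neighborFinset, hadj] at hw
      simp only [mem_singleton, Fin.ext_iff, Fin.val_succ, Fin.val_last] at *
      omega
    exact_mod_cast this
  have h2 : ∀ i : Fin m, (G.degree i.castSucc.succ : ℝ) ≤ 2 := by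
    intro i
    have : G.degree i.castSucc.succ ≤
        ({⟨i.val, by omega⟩, ⟨i.val + 2, by omega⟩} : Finset (Fin (m+2))).card := by
      apply Finset.card_le_card
      intro w hw
      rw [SimpleGraph.mem_neighborFinset, hadj] at hw
      simp only [mem_insert, mem_singleton, Fin.ext_iff, Fin.val_succ, Fin.val_castSucc] at *
      omega
    exact_mod_cast this.trans card_le_two
  have h3 : ∑ i : Fin m, ((G.degree i.castSucc.succ : ℝ)^2 + G.degree i.castSucc.succ)
      ≤ ∑ i : Fin m, (6:ℝ) := by
    refine Finset.sum_le_sum fun i _ => ?_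
    have := h2 i
    have h' : (0:ℝ) ≤ G.degree i.castSucc.succ := by positivity
    nlinarith
  rw [Finset.sum_const, card_univ, Fintype.card_fin, nsmul_eq_mul] at h3
  have e0 : (0:ℝ) ≤ G.degree 0 := by positivity
  have e1 : (0:ℝ) ≤ G.degree (Fin.last m).succ := by positivity
  push_cast
  nlinarith

end deg

end PathLEE

namespace PathLEE

open Finset Matrix

lemma iso_path {n : ℕ} (T : SimpleGraph (Fin n)) (hT : T.IsTree) [DecidableRel T.Adj]
    (hd : ∀ v, T.degree v ≤ 2) : Nonempty (T ≃g SimpleGraph.pathGraph n) := by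
  haveI := hT.connected.nonempty
  obtain ⟨u, v, p, hp, hmax⟩ := SimpleGraph.Walk.exists_isPath_forall_isPath_length_le_length T
  have hinj := hp.getVert_injOn
  have hcl : ∀ x y, x ∈ p.support → T.Adj x y → y ∈ p.support := by
    intro x y hx hxy
    by_contra hy
    obtain ⟨i, rfl, hi⟩ := SimpleGraph.Walk.mem_support_iff_exists_getVert.1 hx
    rcases Nat.eq_zero_or_pos i with h0 | h0
    · subst h0
      rw [SimpleGraph.Walk.getVert_zero] at hxy
      have := hmax _ _ (SimpleGraph.Walk.cons hxy.symm p) (hp.cons hy)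
      rw [SimpleGraph.Walk.length_cons] at this
      omega
    rcases Nat.eq_or_lt_of_le hi with h1 | h1
    · subst h1
      rw [SimpleGraph.Walk.getVert_length] at hxy
      have := hmax _ _ (p.concat hxy) (hp.concat hy hxy)
      rw [SimpleGraph.Walk.length_concat] at this
      omega
    have ha := p.adj_getVert_succ h1
    have hb := p.adj_getVert_succ (i := i - 1) (by omega)
    rw [Nat.sub_add_cancel h0] at hb
    have hne : p.getVert (i-1) ≠ p.getVert (i+1) := by
      intro h
      have := hinj (by simp; omega) (by simp; omega) h
      omega
    have hc : ({p.getVert (i-1), p.getVert (i+1), y} : Finset (Fin n)).card = 3 := by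
      apply card_eq_three.2 ⟨_, _, _, hne, ?_, ?_, rfl⟩
      · rintro rfl; exact hy (p.getVert_mem_support _)
      · rintro rfl; exact hy (p.getVert_mem_support _)
    have hs : ({p.getVert (i-1), p.getVert (i+1), y} : Finset (Fin n)) ⊆
        T.neighborFinset (p.getVert i) := by
      intro z hz
      rw [SimpleGraph.mem_neighborFinset]
      simp only [mem_insert, mem_singleton] at hz
      rcases hz with rfl | rfl | rfl
      · exact hb.symm
      · exact ha
      · exact hxy
    have := card_le_card hs
    rw [hc] at this
    have := hd (p.getVert i)
    rw [← SimpleGraph.card_neighborFinset_eq_degree] at this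
    omega
  have hall : ∀ w, w ∈ p.support := by
    have key : ∀ a w, T.Walk a w → a ∈ p.support → w ∈ p.support := by
      intro a w q
      induction q with
      | nil => exact id
      | cons h q ih => exact fun ha => ih (hcl _ _ ha h)
    intro w
    obtain ⟨q⟩ := hT.connected.preconnected u w
    exact key _ _ q p.start_mem_support
  have hham := hp.isHamiltonian_of_mem hall
  have hlen : p.length + 1 = n := by
    have := hham.length_support
    rw [SimpleGraph.Walk.length_support, Fintype.card_fin] at this
    exact this
  let f : Fin n → Fin n := fun i => p.getVert i.val
  have hf : Function.Injective f := by
    intro a b hab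
    exact Fin.ext (hinj (by simp; omega) (by simp; omega) hab)
  have hfb : Function.Bijective f := Finite.injective_iff_bijective.1 hf
  let e : Fin n ≃ Fin n := Equiv.ofBijective f hfb
  let H := (SimpleGraph.pathGraph n).map e.toEmbedding
  let φ : SimpleGraph.pathGraph n ≃g H := SimpleGraph.Iso.map e _
  have hHT : H ≤ T := by
    rw [SimpleGraph.map_le_iff_le_comap]
    intro a b hab
    rw [SimpleGraph.pathGraph_adj] at hab
    change T.Adj (p.getVert a.val) (p.getVert b.val)
    rcases hab with h | h
    · rw [← h]; exact p.adj_getVert_succ (by omega)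
    · rw [← h]; exact (p.adj_getVert_succ (by omega)).symm
  have hHc : H.Connected := by
    rw [← φ.connected_iff, ← hlen]
    exact SimpleGraph.pathGraph_connected _
  have hTH := (SimpleGraph.isTree_iff_minimal_connected.1 hT).2 hHc hHT
  have : H = T := le_antisymm hHT hTH
  rw [← this]
  exact ⟨φ.symm⟩

lemma lee_hasSum {V : Type*} [Fintype V] [DecidableEq V] (G : SimpleGraph V) [DecidableRel G.Adj] :
    HasSum (fun k : ℕ => ((G.lapMatrix ℝ)^k).trace / (k.factorial : ℝ)) (LEE G) := by
  have h := hasSum_trace (SimpleGraph.posSemidef_lapMatrix ℝ G).1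
  unfold LEE
  convert h

end PathLEE

/-- Among all trees on `n` vertices, the path has the strictly minimal
Laplacian Estrada index. -/
theorem path_lt_lee {n : ℕ} (T : SimpleGraph (Fin n)) (hT : T.IsTree)
    (hne : ¬ Nonempty (T ≃g SimpleGraph.pathGraph n)) :
    LEE (SimpleGraph.pathGraph n) < LEE T := by
  classical
  have hdeg : ∃ u, 3 ≤ T.degree u := by
    by_contra! h
    exact hne (PathLEE.iso_path T hT fun v => Nat.lt_succ_iff.1 (h v))
  obtain ⟨u, hu⟩ := hdeg
  have hn : 2 ≤ n := by
    have h1 := T.degree_lt_card_verts u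
    rw [Fintype.card_fin] at h1
    omega
  obtain ⟨m, rfl⟩ : ∃ m, n = m + 2 := ⟨n - 2, by omega⟩
  refine hasSum_lt (i := 2) ?_ ?_ (PathLEE.lee_hasSum (SimpleGraph.pathGraph (m+2)))
    (PathLEE.lee_hasSum T)
  · intro k
    refine div_le_div_of_nonneg_right ?_ (by positivity)
    cases k with
    | zero => simp
    | succ k =>
      have h1 := PathLEE.tree_trace_ge T hT k
      have h2 := PathLEE.path_trace_eq m _ rfl k
      rw [Fintype.card_fin, h2] at h1
      linarith
  · refine div_lt_div_of_pos_right ?_ (by positivity)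
    have h1 := PathLEE.tree_sq T hT u hu
    have h2 := PathLEE.path_sq m _ rfl
    rw [Fintype.card_fin] at h1
    linarith
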